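/- Let 1 ≤ p < ∞ and for each n ∈ ℕ let X^{(n)} be a random vector in B_p^n with directional distribution C_{n,p}, and set R_n = (∏_{i=1}^n |X_i^{(n)}|)^{1/n} / ((1/n) ∑_{i=1}^n |X_i^{(n)}|^p)^{1/p}. Then the sequence (R_n)_{n∈ℕ} satisfies a large deviation principle on [0,1] with speed n and rate function I_p: for every closed set A ⊆ [0,1], limsup_{n→∞} (1/n) log P(R_n ∈ A) ≤ −inf_{θ∈A} I_p(θ), and for every open set A ⊆ [0,1], liminf_{n→∞} (1/n) log P(R_n ∈ A) ≥ −inf_{θ∈A} I_p(θ), where I_p is extended by +∞ outside (0,1). -/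

import Mathlib

open MeasureTheory ProbabilityTheory Filter Set

noncomputable section

/-- The `ℓ_p`-norm on `ℝ^n`: `‖x‖_p = (∑ |x_i|^p)^{1/p}`. -/
def pNorm (p : ℝ) {n : ℕ} (x : Fin n → ℝ) : ℝ := (∑ i, |x i| ^ p) ^ (1 / p)

/-- The unit ball `B_p^n = {x : ‖x‖_p ≤ 1}`. -/
def unitBallp (n : ℕ) (p : ℝ) : Set (Fin n → ℝ) := {x | pNorm p x ≤ 1}

/-- The unit sphere `S_p^{n-1} = {x : ‖x‖_p = 1}`. -/
def unitSpherep (n : ℕ) (p : ℝ) : Set (Fin n → ℝ) := {x | pNorm p x = 1}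

/-- The cone spanned by a set: `{r x : r ∈ [0,1], x ∈ A}`. -/
def coneOf {n : ℕ} (A : Set (Fin n → ℝ)) : Set (Fin n → ℝ) :=
  {y | ∃ r ∈ Icc (0:ℝ) 1, ∃ x ∈ A, y = r • x}

/-- `C` is the cone probability measure `C_{n,p}` on `S_p^{n-1}`: the probability measure
concentrated on the sphere with `C(A) = vol_n({r x : r ∈ [0,1], x ∈ A})/vol_n(B_p^n)` for
measurable `A ⊆ S_p^{n-1}`. -/
def IsConeMeasure (n : ℕ) (p : ℝ) (C : Measure (Fin n → ℝ)) : Prop :=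
  IsProbabilityMeasure C ∧ C (unitSpherep n p)ᶜ = 0 ∧
    ∀ A : Set (Fin n → ℝ), MeasurableSet A → A ⊆ unitSpherep n p →
      C A = volume (coneOf A) / volume (unitBallp n p)

/-- A random vector `X` (on the probability space `(Ω, P)`) has directional distribution
`C_{n,p}`: it equals in distribution `R • Z`, where `Z ∼ C_{n,p}` and `R` is an independent
random variable with values in `[0,1]` whose law has no atom at `0`.  Independence of `R`
and `Z` is encoded by taking the joint law to be the product measure `μ_R ⊗ C_{n,p}`. -/
def HasConeDirDist (n : ℕ) (p : ℝ) {Ω : Type*} [MeasurableSpace Ω] (P : Measure Ω)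
    (X : Ω → Fin n → ℝ) : Prop :=
  ∃ (μR : Measure ℝ) (C : Measure (Fin n → ℝ)),
    IsProbabilityMeasure μR ∧ μR (Icc (0:ℝ) 1)ᶜ = 0 ∧ μR {0} = 0 ∧
    IsConeMeasure n p C ∧
    Measure.map X P = Measure.map (fun rz : ℝ × (Fin n → ℝ) => rz.1 • rz.2) (μR.prod C)

/-- The digamma function `ψ = Γ'/Γ`. -/
def digammaFn (x : ℝ) : ℝ := deriv Real.Gamma x / Real.Gamma x

/-- `H(x) = ψ(x) - log x`. -/
def Hfun (x : ℝ) : ℝ := digammaFn x - Real.log x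

/-- The inverse `H⁻¹` of the increasing bijection `H : (0,∞) → (-∞,0)`. -/
def Hinv (y : ℝ) : ℝ := Function.invFunOn Hfun (Ioi 0) y

/-- The constant `m_p = (1/p)(ψ(1/p) + log p)`. -/
def mConst (p : ℝ) : ℝ := (1/p) * (digammaFn (1/p) + Real.log p)

/-- `G_p(θ) = H⁻¹(p log θ)`. -/
def Gfun (p θ : ℝ) : ℝ := Hinv (p * Real.log θ)

/-- The rate function
`I_p(θ) = [p G_p(θ) - 1] log θ + G_p(θ)[log G_p(θ) - 1] - log Γ(G_p(θ))
            + (1/p)(1 + log p) + log Γ(1/p)`. -/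
def ratefn (p θ : ℝ) : ℝ :=
  (p * Gfun p θ - 1) * Real.log θ + Gfun p θ * (Real.log (Gfun p θ) - 1)
    - Real.log (Real.Gamma (Gfun p θ)) + (1/p) * (1 + Real.log p)
    + Real.log (Real.Gamma (1/p))

/-- The ratio of the two sides of the `p`-generalized AGM inequality:
`R_n = (∏ |x_i|)^{1/n} / ((1/n) ∑ |x_i|^p)^{1/p}`. -/
def ratioAGM (p : ℝ) {n : ℕ} (x : Fin n → ℝ) : ℝ :=
  (∏ i, |x i|) ^ ((1:ℝ)/n) / ((1/(n:ℝ)) * ∑ i, |x i| ^ p) ^ (1/p)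

/-- The rate function `I_p`, extended by `+∞` outside `(0,1)` (with values in `EReal`). -/
def ratefnExt (p : ℝ) (θ : ℝ) : EReal :=
  if θ ∈ Ioo (0:ℝ) 1 then ((ratefn p θ : ℝ) : EReal) else ⊤

open scoped Topology ENNReal

/-- The remainder `log Γ(x) - x log x + x` in the Stirling approximation, a primitive of `Hfun`. -/
def stirlingRemainder (x : ℝ) : ℝ :=
  Real.log (Real.Gamma x) - x * Real.log x + x

lemma hasDerivAt_log_Gamma {x : ℝ} (hx : 0 < x) :
    HasDerivAt (fun y => Real.log (Real.Gamma y)) (digammaFn x) x := by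
  have hG : DifferentiableAt ℝ Real.Gamma x :=
    Real.differentiableAt_Gamma fun m => by
      have : (0 : ℝ) ≤ m := m.cast_nonneg
      linarith
  exact hG.hasDerivAt.log (Real.Gamma_pos_of_pos hx).ne'

lemma hasDerivAt_stirlingRemainder {x : ℝ} (hx : 0 < x) :
    HasDerivAt stirlingRemainder (Hfun x) x := by
  have h := ((hasDerivAt_log_Gamma hx).sub
    ((hasDerivAt_id x).mul (Real.hasDerivAt_log hx.ne'))).add (hasDerivAt_id x)
  convert! h using 1
  simp only [Hfun, id]
  field_simp
  ring

lemma log_Gamma_add_one {x : ℝ} (hx : 0 < x) :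
    Real.log (Real.Gamma (x + 1)) = Real.log x + Real.log (Real.Gamma x) := by
  rw [Real.Gamma_add_one hx.ne', Real.log_mul hx.ne' (Real.Gamma_pos_of_pos hx).ne']

lemma digammaFn_add_one {x : ℝ} (hx : 0 < x) : digammaFn (x + 1) = digammaFn x + 1 / x := by
  have h1 : HasDerivAt (fun y => Real.log (Real.Gamma (y + 1))) (digammaFn (x + 1)) x :=
    (hasDerivAt_log_Gamma (by linarith : 0 < x + 1)).comp_add_const x 1
  have h2 := (Real.hasDerivAt_log hx.ne').add (hasDerivAt_log_Gamma hx)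
  have h3 : (fun y => Real.log (Real.Gamma (y + 1))) =ᶠ[𝓝 x]
      (Real.log + fun y => Real.log (Real.Gamma y)) := by
    filter_upwards [lt_mem_nhds hx] with y hy using log_Gamma_add_one hy
  rw [h1.unique (h2.congr_of_eventuallyEq h3), one_div, add_comm]

lemma digammaFn_le_log {x : ℝ} (hx : 0 < x) : digammaFn x ≤ Real.log x := by
  have h := Real.convexOn_log_Gamma.le_slope_of_hasDerivAt (x := x) (y := x + 1) hx
    (by simp only [mem_Ioi]; linarith) (by linarith) (hasDerivAt_log_Gamma hx)
  simpa [slope_def_field, log_Gamma_add_one hx] using h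

lemma log_le_digammaFn_add_one {x : ℝ} (hx : 0 < x) : Real.log x ≤ digammaFn (x + 1) := by
  have h := Real.convexOn_log_Gamma.slope_le_of_hasDerivAt (x := x) (y := x + 1) hx
    (by simp only [mem_Ioi]; linarith) (by linarith)
    (hasDerivAt_log_Gamma (by linarith : 0 < x + 1))
  simpa [slope_def_field, log_Gamma_add_one hx] using h

lemma Hfun_nonpos {x : ℝ} (hx : 0 < x) : Hfun x ≤ 0 :=
  sub_nonpos.2 (digammaFn_le_log hx)

lemma neg_one_div_le_Hfun {x : ℝ} (hx : 0 < x) : -(1 / x) ≤ Hfun x := by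
  have := log_le_digammaFn_add_one hx
  rw [digammaFn_add_one hx] at this
  unfold Hfun
  linarith

/-- The increment `H(x + 1) - H(x)`. -/
def Hincrement (x : ℝ) : ℝ := 1 / x - (Real.log (x + 1) - Real.log x)

lemma Hfun_add_one {x : ℝ} (hx : 0 < x) : Hfun (x + 1) = Hfun x + Hincrement x := by
  unfold Hfun Hincrement
  rw [digammaFn_add_one hx]
  ring

lemma Hincrement_strictAntiOn : StrictAntiOn Hincrement (Ioi 0) := by
  have hd : ∀ x ∈ Ioi (0 : ℝ), HasDerivAt Hincrement
      (-(x ^ 2)⁻¹ - ((x + 1)⁻¹ - x⁻¹)) x := by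
    intro x hx
    have hx' : (0 : ℝ) < x := hx
    have h1 : HasDerivAt (fun y : ℝ => Real.log (y + 1)) ((x + 1)⁻¹) x :=
      (Real.hasDerivAt_log (by linarith : x + 1 ≠ 0)).comp_add_const x 1
    have h2 := (hasDerivAt_inv hx'.ne').sub (h1.sub (Real.hasDerivAt_log hx'.ne'))
    convert! h2 using 1
    funext y
    simp [Hincrement]
  refine strictAntiOn_of_deriv_neg (convex_Ioi 0)
    (fun x hx => (hd x hx).continuousAt.continuousWithinAt) fun x hx => ?_
  rw [interior_Ioi] at hx
  rw [(hd x hx).deriv]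
  have hx' : (0 : ℝ) < x := hx
  have : -(x ^ 2)⁻¹ - ((x + 1)⁻¹ - x⁻¹) = -(1 / (x ^ 2 * (x + 1))) := by
    field_simp
    ring
  rw [this]
  exact neg_neg_of_pos (by positivity)

lemma Hfun_add_nat_sub {x y : ℝ} (hx : 0 < x) (hxy : x < y) (N : ℕ) :
    Hfun (y + N) - Hfun (x + N) ≤ Hfun y - Hfun x := by
  induction N with
  | zero => simp
  | succ k ih =>
    have hk : (0 : ℝ) ≤ k := k.cast_nonneg
    have h1 := Hfun_add_one (x := x + k) (by linarith)
    have h2 := Hfun_add_one (x := y + k) (by linarith)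
    have h3 := Hincrement_strictAntiOn (a := x + k) (b := y + k) (by simp; linarith)
      (by simp; linarith) (by linarith)
    push_cast
    rw [← add_assoc, ← add_assoc]
    linarith

lemma Hfun_le_Hfun {x y : ℝ} (hx : 0 < x) (hxy : x < y) : Hfun x ≤ Hfun y := by
  have hlim : Tendsto (fun N : ℕ => -(1 / (y + N))) atTop (𝓝 0) := by
    have h : Tendsto (fun N : ℕ => y + (N : ℝ)) atTop atTop :=
      tendsto_atTop_add_const_left _ _ tendsto_natCast_atTop_atTop
    simpa using h.inv_tendsto_atTop.neg
  have : 0 ≤ Hfun y - Hfun x := by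
    refine le_of_tendsto hlim (Eventually.of_forall fun N => ?_)
    have hN : (0 : ℝ) ≤ N := N.cast_nonneg
    have h1 := Hfun_add_nat_sub hx hxy N
    have h2 := neg_one_div_le_Hfun (x := y + N) (by linarith)
    have h3 := Hfun_nonpos (x := x + N) (by linarith)
    linarith
  linarith

lemma Hfun_strictMonoOn : StrictMonoOn Hfun (Ioi 0) := by
  intro x hx y hy hxy
  have hx' : (0 : ℝ) < x := hx
  have hy' : (0 : ℝ) < y := hy
  have h1 := Hfun_le_Hfun (x := x + 1) (y := y + 1) (by linarith) (by linarith)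
  have h2 := Hincrement_strictAntiOn hx hy hxy
  rw [Hfun_add_one hx', Hfun_add_one hy'] at h1
  linarith

lemma exists_Hfun_lt (y : ℝ) : ∃ x, 0 < x ∧ Hfun x < y := by
  have hlim : Tendsto (fun u : ℝ => u - Real.log (1 + u)) atTop atTop := by
    refine tendsto_atTop_mono' _ (f₁ := fun u : ℝ => u / 2 - Real.log 2) ?_
      (tendsto_atTop_add_const_right _ _ (tendsto_id.atTop_div_const two_pos))
    filter_upwards [eventually_gt_atTop 0] with u hu
    have h := Real.log_le_sub_one_of_pos (x := (1 + u) / 2) (by linarith)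
    rw [Real.log_div (by linarith) two_ne_zero] at h
    linarith
  obtain ⟨u, hu, hu'⟩ := ((hlim.eventually_gt_atTop (-y)).and (eventually_gt_atTop 0)).exists
  refine ⟨1 / u, by positivity, ?_⟩
  have hpos : (0 : ℝ) < 1 / u := by positivity
  have h1 := Hfun_add_one hpos
  have h2 := Hfun_nonpos (x := 1 / u + 1) (by linarith)
  have h3 : Hincrement (1 / u) = u - Real.log (1 + u) := by
    unfold Hincrement
    rw [← Real.log_div (by positivity) (by positivity)]
    congr 2 <;> field_simp
  linarith

lemma exists_lt_Hfun {y : ℝ} (hy : y < 0) : ∃ x, 0 < x ∧ y < Hfun x := by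
  refine ⟨2 / (-y), by apply div_pos <;> linarith, ?_⟩
  have h := neg_one_div_le_Hfun (x := 2 / (-y)) (by apply div_pos <;> linarith)
  rw [one_div_div] at h
  linarith

lemma exists_Hfun_eq {y : ℝ} (hy : y < 0) : ∃ x ∈ Ioi (0 : ℝ), Hfun x = y := by
  obtain ⟨a, ha, ha'⟩ := exists_Hfun_lt y
  obtain ⟨b, hb, hb'⟩ := exists_lt_Hfun hy
  have hc : OrdConnected (Hfun '' Ioi 0) := ordConnected_Ioi.image_hasDerivWithinAt
    fun x hx => (hasDerivAt_stirlingRemainder hx).hasDerivWithinAt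
  exact hc.out (mem_image_of_mem _ ha) (mem_image_of_mem _ hb) ⟨ha'.le, hb'.le⟩

lemma Hinv_pos {y : ℝ} (hy : y < 0) : 0 < Hinv y :=
  Function.invFunOn_mem (exists_Hfun_eq hy)

lemma Hfun_Hinv {y : ℝ} (hy : y < 0) : Hfun (Hinv y) = y :=
  Function.invFunOn_eq (exists_Hfun_eq hy)

lemma Hfun_neg {x : ℝ} (hx : 0 < x) : Hfun x < 0 :=
  (Hfun_strictMonoOn hx (mem_Ioi.2 (by linarith : 0 < x + 1)) (by linarith)).trans_le
    (Hfun_nonpos (by linarith))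

lemma Hinv_Hfun {x : ℝ} (hx : 0 < x) : Hinv (Hfun x) = x :=
  Hfun_strictMonoOn.injOn (Hinv_pos (Hfun_neg hx)) hx (Hfun_Hinv (Hfun_neg hx))

lemma stirlingRemainder_antitoneOn : AntitoneOn stirlingRemainder (Ioi 0) := by
  refine antitoneOn_of_deriv_nonpos (convex_Ioi 0)
    (fun x hx => (hasDerivAt_stirlingRemainder hx).continuousAt.continuousWithinAt)
    (fun x hx => ?_) fun x hx => ?_ <;> rw [interior_Ioi] at hx
  · exact (hasDerivAt_stirlingRemainder hx).differentiableAt.differentiableWithinAt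
  · rw [(hasDerivAt_stirlingRemainder hx).deriv]
    exact Hfun_nonpos hx

lemma stirlingRemainder_add_log_monotoneOn :
    MonotoneOn (fun x => stirlingRemainder x + Real.log x) (Ioi 0) := by
  have hd : ∀ x ∈ Ioi (0 : ℝ),
      HasDerivAt (fun x => stirlingRemainder x + Real.log x) (Hfun x + x⁻¹) x := fun x hx =>
    (hasDerivAt_stirlingRemainder hx).add (Real.hasDerivAt_log (ne_of_gt hx))
  refine monotoneOn_of_deriv_nonneg (convex_Ioi 0)
    (fun x hx => (hd x hx).continuousAt.continuousWithinAt)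
    (fun x hx => ?_) fun x hx => ?_ <;> rw [interior_Ioi] at hx
  · exact (hd x hx).differentiableAt.differentiableWithinAt
  · rw [(hd x hx).deriv]
    have := neg_one_div_le_Hfun hx
    rw [one_div] at this
    linarith

lemma stirlingRemainder_one : stirlingRemainder 1 = 1 := by
  simp [stirlingRemainder]

lemma tendsto_stirlingRemainder_div : Tendsto (fun x => stirlingRemainder x / x) atTop (𝓝 0) := by
  have h1 : Tendsto (fun x : ℝ => 1 / x - Real.log x / x) atTop (𝓝 0) := by
    have h := Real.isLittleO_log_id_atTop.tendsto_div_nhds_zero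
    simpa using tendsto_inv_atTop_zero.sub h
  have h2 : Tendsto (fun x : ℝ => 1 / x) atTop (𝓝 0) := by
    simpa using tendsto_inv_atTop_zero (𝕜 := ℝ)
  refine tendsto_of_tendsto_of_tendsto_of_le_of_le' h1 h2 ?_ ?_
  · filter_upwards [eventually_ge_atTop 1] with x hx
    rw [← sub_div]
    have := stirlingRemainder_add_log_monotoneOn (a := 1) (b := x) (by simp)
      (by simp; linarith) hx
    simp only [stirlingRemainder_one, Real.log_one] at this
    gcongr
    linarith
  · filter_upwards [eventually_ge_atTop 1] with x hx
    have := stirlingRemainder_antitoneOn (a := 1) (b := x) (by simp) (by simp; linarith) hx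
    rw [stirlingRemainder_one] at this
    gcongr

lemma tendsto_stirlingRemainder_mul_div {a : ℝ} (ha : 0 < a) :
    Tendsto (fun n : ℕ => stirlingRemainder (n * a) / n) atTop (𝓝 0) := by
  have h : Tendsto (fun n : ℕ => (n : ℝ) * a) atTop atTop :=
    tendsto_natCast_atTop_atTop.atTop_mul_const ha
  have := (tendsto_stirlingRemainder_div.comp h).mul_const a
  rw [zero_mul] at this
  refine this.congr' ?_
  filter_upwards [eventually_gt_atTop 0] with n hn
  have : (0 : ℝ) < n := by exact_mod_cast hn
  simp only [Function.comp]
  field_simp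

lemma tendsto_stirlingRemainder_natCast :
    Tendsto (fun n : ℕ => stirlingRemainder n) atTop atBot := by
  have h1 : Tendsto (fun n : ℕ => Real.log (Stirling.stirlingSeq n)) atTop
      (𝓝 (Real.log (√Real.pi))) :=
    Stirling.tendsto_stirlingSeq_sqrt_pi.log (by positivity)
  have h2 : Tendsto (fun n : ℕ => 1 / 2 * Real.log 2 + -(1 / 2 * Real.log n)) atTop atBot :=
    tendsto_atBot_add_const_left _ _ (tendsto_neg_atTop_atBot.comp
      ((Real.tendsto_log_atTop.comp tendsto_natCast_atTop_atTop).const_mul_atTop (by norm_num)))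
  refine (h1.add_atBot h2).congr' ?_
  filter_upwards [eventually_gt_atTop 0] with n hn
  have hn' : (0 : ℝ) < n := by exact_mod_cast hn
  have h3 : Real.log (n.factorial : ℝ) = Real.log n + Real.log (Real.Gamma n) := by
    rw [← log_Gamma_add_one hn', Real.Gamma_nat_eq_factorial]
  rw [Stirling.log_stirlingSeq_formula, h3, Real.log_mul two_ne_zero hn'.ne',
    Real.log_div hn'.ne' (Real.exp_ne_zero _), Real.log_exp, stirlingRemainder]
  ring

lemma ratefn_eq {p : ℝ} (θ : ℝ) :
    ratefn p θ = (p * Gfun p θ - 1) * Real.log θ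
      - (stirlingRemainder (Gfun p θ) - stirlingRemainder (1 / p)) := by
  unfold ratefn stirlingRemainder
  rw [one_div, Real.log_inv]
  ring

lemma mul_log_neg {p θ : ℝ} (hp : 0 < p) (hθ : θ ∈ Ioo (0 : ℝ) 1) : p * Real.log θ < 0 :=
  mul_neg_of_pos_of_neg hp (Real.log_neg hθ.1 hθ.2)

lemma Gfun_pos {p θ : ℝ} (hp : 0 < p) (hθ : θ ∈ Ioo (0 : ℝ) 1) : 0 < Gfun p θ :=
  Hinv_pos (mul_log_neg hp hθ)

lemma Hfun_Gfun {p θ : ℝ} (hp : 0 < p) (hθ : θ ∈ Ioo (0 : ℝ) 1) :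
    Hfun (Gfun p θ) = p * Real.log θ :=
  Hfun_Hinv (mul_log_neg hp hθ)

/-- Integration in polar coordinates for nonnegative functions. -/
lemma lintegral_eq_lintegral_toSphere {n : ℕ} (hn : 1 ≤ n) {f : (Fin n → ℝ) → ℝ≥0∞}
    (hf : Measurable f) :
    ∫⁻ x, f x = ∫⁻ u, (∫⁻ r in Ioi (0 : ℝ), ENNReal.ofReal (r ^ (n - 1)) * f (r • u.1))
      ∂(volume : Measure (Fin n → ℝ)).toSphere := by
  have : Nonempty (Fin n) := ⟨⟨0, hn⟩⟩
  calc
    ∫⁻ x, f x = ∫⁻ x : ({(0)}ᶜ : Set (Fin n → ℝ)), f x.1 ∂(volume.comap Subtype.val) := by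
      rw [lintegral_subtype_comap (measurableSet_singleton _).compl, restrict_compl_singleton]
    _ = ∫⁻ z, f (z.2.1 • z.1.1)
          ∂((volume : Measure (Fin n → ℝ)).toSphere.prod (.volumeIoiPow (n - 1))) := by
      have h := (volume : Measure (Fin n → ℝ)).measurePreserving_homeomorphUnitSphereProd
      rw [Module.finrank_fin_fun] at h
      rw [← h.lintegral_comp (f := fun z => f (z.2.1 • z.1.1)) (by fun_prop)]
      refine lintegral_congr fun x => ?_
      rw [← homeomorphUnitSphereProd_symm_apply_coe, Homeomorph.symm_apply_apply]
    _ = _ := by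
      rw [lintegral_prod _ (by fun_prop)]
      refine lintegral_congr fun u => ?_
      rw [Measure.volumeIoiPow, lintegral_withDensity_eq_lintegral_mul _ (by fun_prop)
        (by fun_prop)]
      exact lintegral_subtype_comap measurableSet_Ioi
        fun r => ENNReal.ofReal (r ^ (n - 1)) * f (r • u.1)

lemma pNorm_smul {p : ℝ} (hp : 1 ≤ p) {n : ℕ} {r : ℝ} (hr : 0 ≤ r) (x : Fin n → ℝ) :
    pNorm p (r • x) = r * pNorm p x := by
  have hp0 : p ≠ 0 := by linarith
  simp only [pNorm, Pi.smul_apply, smul_eq_mul, abs_mul, abs_of_nonneg hr,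
    Real.mul_rpow hr (abs_nonneg _), ← Finset.mul_sum]
  rw [Real.mul_rpow (by positivity) (by positivity), ← Real.rpow_mul hr, mul_one_div_cancel hp0,
    Real.rpow_one]

lemma sum_abs_rpow_pos {p : ℝ} {n : ℕ} {x : Fin n → ℝ} (hx : x ≠ 0) :
    0 < ∑ i, |x i| ^ p := by
  obtain ⟨i, hi⟩ := Function.ne_iff.1 hx
  have : 0 < |x i| ^ p := Real.rpow_pos_of_pos (abs_pos.2 hi) p
  exact this.trans_le
    (Finset.single_le_sum (f := fun i => |x i| ^ p) (fun j _ => by positivity) (Finset.mem_univ i))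

lemma pNorm_pos {p : ℝ} {n : ℕ} {x : Fin n → ℝ} (hx : x ≠ 0) : 0 < pNorm p x :=
  Real.rpow_pos_of_pos (sum_abs_rpow_pos hx) _

lemma pNorm_rpow {p : ℝ} (hp : 1 ≤ p) {n : ℕ} (x : Fin n → ℝ) :
    pNorm p x ^ p = ∑ i, |x i| ^ p := by
  have hp0 : p ≠ 0 := by linarith
  rw [pNorm, ← Real.rpow_mul (by positivity), one_div_mul_cancel hp0, Real.rpow_one]

lemma measurable_pNorm (p : ℝ) {n : ℕ} : Measurable (pNorm p : (Fin n → ℝ) → ℝ) := by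
  unfold pNorm
  fun_prop

lemma measurable_ratioAGM (p : ℝ) {n : ℕ} : Measurable (ratioAGM p : (Fin n → ℝ) → ℝ) := by
  unfold ratioAGM
  fun_prop

lemma measurableSet_unitBallp (n : ℕ) (p : ℝ) : MeasurableSet (unitBallp n p) :=
  measurable_pNorm p measurableSet_Iic

lemma ratioAGM_smul {p : ℝ} (hp : 1 ≤ p) {n : ℕ} (hn : 1 ≤ n) {r : ℝ} (hr : 0 < r)
    (x : Fin n → ℝ) : ratioAGM p (r • x) = ratioAGM p x := by
  have hp0 : p ≠ 0 := by linarith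
  have hn0 : (n : ℝ) ≠ 0 := by positivity
  simp only [ratioAGM, Pi.smul_apply, smul_eq_mul, abs_mul, abs_of_pos hr, Finset.prod_mul_distrib,
    Real.mul_rpow hr.le (abs_nonneg _), ← Finset.mul_sum, Finset.prod_const, Finset.card_univ,
    Fintype.card_fin]
  rw [Real.mul_rpow (by positivity) (by positivity), ← Real.rpow_natCast, ← Real.rpow_mul hr.le,
    mul_one_div_cancel hn0, Real.rpow_one, mul_left_comm, Real.mul_rpow (by positivity)
    (by positivity), ← Real.rpow_mul hr.le, mul_one_div_cancel hp0, Real.rpow_one,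
    mul_div_mul_left _ _ hr.ne']

lemma lintegral_rpow_mul_exp_neg {p b s : ℝ} (hp : 0 < p) {n : ℕ} (hn : 1 ≤ n) (hb : -1 * n < b)
    (hs : 0 < s) :
    ∫⁻ r in Ioi (0 : ℝ), ENNReal.ofReal (r ^ (n - 1)) *
        ENNReal.ofReal ((r * s) ^ b * Real.exp (-(r * s) ^ p)) =
      ENNReal.ofReal (1 / p * Real.Gamma ((n + b) / p) * s ^ (-(n : ℝ))) := by
  have hq : -1 < n - 1 + b := by linarith
  have hI := integrableOn_rpow_mul_exp_neg_mul_rpow hq hp (Real.rpow_pos_of_pos hs p)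
  have hEq : ∀ r ∈ Ioi (0 : ℝ), ENNReal.ofReal (r ^ (n - 1)) *
        ENNReal.ofReal ((r * s) ^ b * Real.exp (-(r * s) ^ p)) =
      ENNReal.ofReal (s ^ b * (r ^ (n - 1 + b) * Real.exp (-s ^ p * r ^ p))) := by
    intro r hr
    have hr' : (0 : ℝ) < r := hr
    rw [← ENNReal.ofReal_mul (by positivity), Real.mul_rpow hr'.le hs.le,
      Real.mul_rpow hr'.le hs.le, Real.rpow_add hr', ← Nat.cast_pred hn, Real.rpow_natCast]
    congr 1
    rw [neg_mul, mul_comm (s ^ p)]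
    ring
  rw [setLIntegral_congr_fun measurableSet_Ioi hEq, ← ofReal_integral_eq_lintegral_ofReal
    (hI.const_mul _)]
  · rw [integral_const_mul, integral_rpow_mul_exp_neg_mul_rpow hp hq (Real.rpow_pos_of_pos hs p),
      ← Real.rpow_mul hs.le]
    congr 1
    have h1 : s ^ (-(n : ℝ)) = s ^ b * s ^ (p * (-(n - 1 + b + 1) / p)) := by
      rw [← Real.rpow_add hs]
      congr 1
      field_simp
      ring
    rw [h1]
    ring_nf
  · filter_upwards [ae_restrict_mem measurableSet_Ioi] with r hr
    have hr' : (0 : ℝ) < r := hr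
    simp only [Pi.zero_apply]
    positivity

lemma lintegral_pow_indicator {s : ℝ} {n : ℕ} (hn : 1 ≤ n) (hs : 0 < s) :
    ∫⁻ r in Ioi (0 : ℝ), ENNReal.ofReal (r ^ (n - 1)) * (Iic (1 : ℝ)).indicator 1 (r * s) =
      ENNReal.ofReal (1 / n * s ^ (-(n : ℝ))) := by
  have hEq : ∀ r : ℝ, ENNReal.ofReal (r ^ (n - 1)) * (Iic (1 : ℝ)).indicator 1 (r * s) =
      (Iic (1 / s)).indicator (fun r => ENNReal.ofReal (r ^ (n - 1))) r := by
    intro r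
    simp only [indicator, mem_Iic, le_div_iff₀ hs]
    split_ifs <;> simp
  simp_rw [hEq]
  rw [lintegral_indicator measurableSet_Iic, Measure.restrict_restrict measurableSet_Iic,
    Iic_inter_Ioi, ← ofReal_integral_eq_lintegral_ofReal
      (intervalIntegral.intervalIntegrable_pow _).1,
    ← intervalIntegral.integral_of_le (by positivity)]
  · rw [integral_pow, Nat.sub_add_cancel hn, Nat.cast_pred hn, zero_pow (by omega),
      Real.rpow_neg hs.le, Real.rpow_natCast]
    congr 1
    simp
    ring
  · filter_upwards [ae_restrict_mem measurableSet_Ioc] with r hr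
    exact pow_nonneg hr.1.le _

/-- For a function that is constant along rays, the integral against a radial weight is
proportional to the integral over the unit ball. -/
lemma lintegral_homogeneous_mul_radial {p b : ℝ} (hp : 1 ≤ p) {n : ℕ} (hn : 1 ≤ n)
    (hb : -1 * n < b) {h : (Fin n → ℝ) → ℝ≥0∞} (hm : Measurable h)
    (hh : ∀ r : ℝ, 0 < r → ∀ x, h (r • x) = h x) :
    ∫⁻ x, h x * ENNReal.ofReal (pNorm p x ^ b * Real.exp (-pNorm p x ^ p)) =
      ENNReal.ofReal (n / p * Real.Gamma ((n + b) / p)) * ∫⁻ x in unitBallp n p, h x := by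
  have hp0 : 0 < p := by linarith
  have hmN := measurable_pNorm p (n := n)
  have hne : ∀ u : Metric.sphere (0 : Fin n → ℝ) 1, u.1 ≠ 0 := fun u =>
    ne_zero_of_mem_unit_sphere u
  have hball : ∫⁻ x in unitBallp n p, h x = ∫⁻ x, h x * (Iic (1 : ℝ)).indicator 1 (pNorm p x) := by
    rw [← lintegral_indicator (measurableSet_unitBallp n p)]
    refine lintegral_congr fun x => ?_
    by_cases hx : pNorm p x ≤ 1 <;> simp [indicator, unitBallp, hx]
  have hind : Measurable ((Iic (1 : ℝ)).indicator (1 : ℝ → ℝ≥0∞)) :=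
    measurable_one.indicator measurableSet_Iic
  rw [hball, lintegral_eq_lintegral_toSphere hn (by fun_prop),
    lintegral_eq_lintegral_toSphere
      (f := fun x => h x * (Iic (1 : ℝ)).indicator 1 (pNorm p x)) hn (hm.mul (hind.comp hmN)),
    ← lintegral_const_mul' _ _ ENNReal.ofReal_ne_top]
  refine lintegral_congr fun u => ?_
  have hs : 0 < pNorm p u.1 := pNorm_pos (hne u)
  have hL : ∀ r ∈ Ioi (0 : ℝ), ENNReal.ofReal (r ^ (n - 1)) * (h (r • u.1) *
      ENNReal.ofReal (pNorm p (r • u.1) ^ b * Real.exp (-pNorm p (r • u.1) ^ p))) =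
      h u.1 * (ENNReal.ofReal (r ^ (n - 1)) *
        ENNReal.ofReal ((r * pNorm p u.1) ^ b * Real.exp (-(r * pNorm p u.1) ^ p))) := by
    intro r hr
    rw [hh r hr, pNorm_smul hp (le_of_lt hr), mul_left_comm]
  have hR : ∀ r ∈ Ioi (0 : ℝ), ENNReal.ofReal (r ^ (n - 1)) * (h (r • u.1) *
      (Iic (1 : ℝ)).indicator 1 (pNorm p (r • u.1))) =
      h u.1 * (ENNReal.ofReal (r ^ (n - 1)) *
        (Iic (1 : ℝ)).indicator 1 (r * pNorm p u.1)) := by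
    intro r hr
    rw [hh r hr, pNorm_smul hp (le_of_lt hr), mul_left_comm]
  have hm1 : Measurable fun r : ℝ => ENNReal.ofReal (r ^ (n - 1)) *
      (Iic (1 : ℝ)).indicator (1 : ℝ → ℝ≥0∞) (r * pNorm p u.1) :=
    Measurable.mul (by fun_prop) (hind.comp (measurable_id.mul_const _))
  rw [setLIntegral_congr_fun measurableSet_Ioi hL, setLIntegral_congr_fun measurableSet_Ioi hR,
    lintegral_const_mul _ (by fun_prop), lintegral_const_mul _ hm1,
    lintegral_rpow_mul_exp_neg hp0 hn hb hs, lintegral_pow_indicator hn hs, mul_left_comm,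
    ← ENNReal.ofReal_mul]
  · congr 2
    have : (n : ℝ) ≠ 0 := by positivity
    field_simp
  · have : 0 < Real.Gamma ((n + b) / p) :=
      Real.Gamma_pos_of_pos (div_pos (by linarith) hp0)
    positivity

lemma integral_abs_rpow_mul_exp_neg {p t : ℝ} (hp : 1 ≤ p) (ht : -1 < t) :
    ∫ x : ℝ, |x| ^ t * Real.exp (-|x| ^ p) = 2 * (1 / p * Real.Gamma ((1 + t) / p)) := by
  rw [integral_comp_abs (f := fun x => x ^ t * Real.exp (-x ^ p)),
    integral_rpow_mul_exp_neg_rpow (by linarith) ht, add_comm]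

lemma lintegral_prod_abs_rpow {p t : ℝ} (hp : 1 ≤ p) (ht : -1 < t) (n : ℕ) :
    ∫⁻ x : Fin n → ℝ, ENNReal.ofReal (∏ i, (|x i| ^ t * Real.exp (-|x i| ^ p))) =
      ENNReal.ofReal ((2 * (1 / p * Real.Gamma ((1 + t) / p))) ^ n) := by
  have hG : 0 < Real.Gamma ((1 + t) / p) :=
    Real.Gamma_pos_of_pos (div_pos (by linarith) (by linarith))
  have hI : ∫ x : Fin n → ℝ, ∏ i, (|x i| ^ t * Real.exp (-|x i| ^ p)) =
      (2 * (1 / p * Real.Gamma ((1 + t) / p))) ^ n := by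
    rw [integral_fintype_prod_volume_eq_pow (fun x : ℝ => |x| ^ t * Real.exp (-|x| ^ p)),
      integral_abs_rpow_mul_exp_neg hp ht, Fintype.card_fin]
  rw [← hI, ofReal_integral_eq_lintegral_ofReal]
  · refine Integrable.of_integral_ne_zero ?_
    rw [hI]
    have : 0 < p := by linarith
    positivity
  · refine Eventually.of_forall fun x => ?_
    simp only [Pi.zero_apply]
    positivity

lemma ae_forall_coord_ne_zero (n : ℕ) : ∀ᵐ x : Fin n → ℝ, ∀ i, x i ≠ 0 := by
  refine ae_all_iff.2 fun i => ?_
  exact (Measure.quasiMeasurePreserving_eval (fun _ : Fin n => (volume : Measure ℝ)) i).ae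
    (Measure.ae_ne volume (0 : ℝ))

lemma ratioAGM_pos {p : ℝ} {n : ℕ} (hn : 1 ≤ n) {x : Fin n → ℝ} (hx : ∀ i, x i ≠ 0) :
    0 < ratioAGM p x := by
  have hx0 : x ≠ 0 := fun h => hx ⟨0, hn⟩ (by simp [h])
  have h1 := sum_abs_rpow_pos (p := p) hx0
  have h2 : 0 < ∏ i, |x i| := Finset.prod_pos fun i _ => abs_pos.2 (hx i)
  have : (0 : ℝ) < n := by exact_mod_cast hn
  unfold ratioAGM
  positivity

lemma exp_log_ratioAGM_mul {p t : ℝ} (hp : 1 ≤ p) {n : ℕ} (hn : 1 ≤ n) {x : Fin n → ℝ}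
    (hx : ∀ i, x i ≠ 0) :
    Real.exp (n * t * Real.log (ratioAGM p x)) *
        (pNorm p x ^ (n * t) * Real.exp (-pNorm p x ^ p)) =
      (n : ℝ) ^ (n * t / p) * ∏ i, (|x i| ^ t * Real.exp (-|x i| ^ p)) := by
  have hx0 : x ≠ 0 := fun h => hx ⟨0, hn⟩ (by simp [h])
  have h1 := sum_abs_rpow_pos (p := p) hx0
  have h2 : ∀ i, 0 < |x i| := fun i => abs_pos.2 (hx i)
  have h3 : 0 < ∏ i, |x i| := Finset.prod_pos fun i _ => h2 i
  have hn' : (0 : ℝ) < n := by exact_mod_cast hn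
  have hp0 : 0 < p := by linarith
  have hlog : Real.log (ratioAGM p x) = 1 / n * ∑ i, Real.log |x i|
      - 1 / p * (Real.log (∑ i, |x i| ^ p) - Real.log n) := by
    rw [ratioAGM, Real.log_div (by positivity) (by positivity), Real.log_rpow h3,
      Real.log_rpow (by positivity), Real.log_mul (by positivity) h1.ne',
      Real.log_prod (fun i _ => (h2 i).ne'), one_div (n : ℝ), Real.log_inv]
    ring
  have hprod : ∏ i, (|x i| ^ t * Real.exp (-|x i| ^ p)) =
      Real.exp (t * ∑ i, Real.log |x i|) * Real.exp (-∑ i, |x i| ^ p) := by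
    rw [Finset.prod_mul_distrib, ← Real.exp_sum, Finset.sum_neg_distrib, Finset.mul_sum,
      Real.exp_sum]
    congr 1
    refine Finset.prod_congr rfl fun i _ => ?_
    rw [Real.rpow_def_of_pos (h2 i), mul_comm]
  rw [hprod, pNorm_rpow hp, hlog, pNorm, ← Real.rpow_mul h1.le, Real.rpow_def_of_pos h1,
    Real.rpow_def_of_pos hn', ← Real.exp_add, ← Real.exp_add, ← Real.exp_add,
    ← Real.exp_add]
  congr 1
  field_simp
  ring

/-- The exponential moments of `log R_n` over the unit ball. -/
lemma lintegral_unitBallp_exp_log_ratioAGM {p t : ℝ} (hp : 1 ≤ p) (ht : -1 < t) {n : ℕ}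
    (hn : 1 ≤ n) :
    ∫⁻ x in unitBallp n p, ENNReal.ofReal (Real.exp (n * t * Real.log (ratioAGM p x))) =
      ENNReal.ofReal ((n : ℝ) ^ (n * t / p) * (2 * (1 / p * Real.Gamma ((1 + t) / p))) ^ n /
        (n / p * Real.Gamma (n * ((1 + t) / p)))) := by
  have hp0 : 0 < p := by linarith
  have hn' : (0 : ℝ) < n := by exact_mod_cast hn
  have hmR := measurable_ratioAGM p (n := n)
  have hc : 0 < n / p * Real.Gamma (n * ((1 + t) / p)) := by
    have : 0 < Real.Gamma (n * ((1 + t) / p)) :=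
      Real.Gamma_pos_of_pos (mul_pos hn' (div_pos (by linarith) hp0))
    positivity
  have key := lintegral_homogeneous_mul_radial (b := n * t) hp hn (by nlinarith)
    (h := fun x => ENNReal.ofReal (Real.exp (n * t * Real.log (ratioAGM p x)))) (by fun_prop)
    (fun r hr x => by rw [ratioAGM_smul hp hn hr])
  have hae : ∀ᵐ x : Fin n → ℝ, ENNReal.ofReal (Real.exp (n * t * Real.log (ratioAGM p x))) *
      ENNReal.ofReal (pNorm p x ^ (n * t) * Real.exp (-pNorm p x ^ p)) =
      ENNReal.ofReal ((n : ℝ) ^ (n * t / p)) *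
        ENNReal.ofReal (∏ i, (|x i| ^ t * Real.exp (-|x i| ^ p))) := by
    filter_upwards [ae_forall_coord_ne_zero n] with x hx
    rw [← ENNReal.ofReal_mul (by positivity), exp_log_ratioAGM_mul hp hn hx,
      ENNReal.ofReal_mul (by positivity)]
  rw [lintegral_congr_ae hae, lintegral_const_mul' _ _ ENNReal.ofReal_ne_top,
    lintegral_prod_abs_rpow hp ht, ← ENNReal.ofReal_mul (by positivity),
    show (n + n * t) / p = n * ((1 + t) / p) by ring] at key
  rw [ENNReal.ofReal_div_of_pos hc,
    ENNReal.eq_div_iff (ENNReal.ofReal_pos.2 hc).ne' ENNReal.ofReal_ne_top, key]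

/-- The uniform distribution on the unit ball of `ℓ_p^n`. -/
def unifBallp (n : ℕ) (p : ℝ) : Measure (Fin n → ℝ) :=
  (volume (unitBallp n p))⁻¹ • volume.restrict (unitBallp n p)

lemma unifBallp_apply {n : ℕ} {p : ℝ} {S : Set (Fin n → ℝ)} (hS : MeasurableSet S) :
    unifBallp n p S = volume (S ∩ unitBallp n p) / volume (unitBallp n p) := by
  rw [unifBallp, Measure.smul_apply, Measure.restrict_apply hS, smul_eq_mul, mul_comm,
    ENNReal.div_eq_inv_mul, mul_comm]

lemma ae_unifBallp_of_ae {n : ℕ} {p : ℝ} {q : (Fin n → ℝ) → Prop}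
    (h : ∀ᵐ x, q x) : ∀ᵐ x ∂(unifBallp n p), q x :=
  (Measure.smul_absolutelyContinuous.trans Measure.restrict_le_self.absolutelyContinuous).ae_le h

lemma coneOf_inter_unitSpherep_ae_eq {p : ℝ} (hp : 1 ≤ p) {n : ℕ} (hn : 1 ≤ n)
    {S : Set (Fin n → ℝ)} (hS : ∀ r : ℝ, 0 < r → ∀ x, r • x ∈ S ↔ x ∈ S) :
    coneOf (S ∩ unitSpherep n p) =ᵐ[volume] (S ∩ unitBallp n p : Set (Fin n → ℝ)) := by
  have : Nonempty (Fin n) := ⟨⟨0, hn⟩⟩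
  filter_upwards [Measure.ae_ne volume (0 : Fin n → ℝ)] with y hy
  refine propext ⟨?_, fun h => ?_⟩
  · rintro ⟨r, hr, x, ⟨hxS, hx⟩, rfl⟩
    have hr0 : 0 < r := hr.1.lt_of_ne fun h => hy (by simp [← h])
    refine ⟨(hS r hr0 x).2 hxS, ?_⟩
    have hx' : pNorm p x = 1 := hx
    change pNorm p (r • x) ≤ 1
    rw [pNorm_smul hp hr.1, hx', mul_one]
    exact hr.2
  · have hpos : 0 < pNorm p y := pNorm_pos hy
    refine ⟨pNorm p y, ⟨hpos.le, h.2⟩, (pNorm p y)⁻¹ • y,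
      ⟨(hS _ (inv_pos.2 hpos) y).2 h.1, ?_⟩, by rw [smul_inv_smul₀ hpos.ne']⟩
    change pNorm p _ = 1
    rw [pNorm_smul hp (inv_pos.2 hpos).le, inv_mul_cancel₀ hpos.ne']

lemma IsConeMeasure.apply_eq_unifBallp {p : ℝ} (hp : 1 ≤ p) {n : ℕ} (hn : 1 ≤ n)
    {C : Measure (Fin n → ℝ)} (hC : IsConeMeasure n p C) {S : Set (Fin n → ℝ)}
    (hSm : MeasurableSet S) (hS : ∀ r : ℝ, 0 < r → ∀ x, r • x ∈ S ↔ x ∈ S) :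
    C S = unifBallp n p S := by
  have hsph : MeasurableSet (unitSpherep n p) :=
    measurable_pNorm p (measurableSet_singleton (1 : ℝ))
  rw [← measure_inter_conull hC.2.1, hC.2.2 _ (hSm.inter hsph) inter_subset_right,
    measure_congr (coneOf_inter_unitSpherep_ae_eq hp hn hS), unifBallp_apply hSm]

lemma HasConeDirDist.measure_ratioAGM_mem {p : ℝ} (hp : 1 ≤ p) {n : ℕ} (hn : 1 ≤ n)
    {Ω : Type*} [MeasurableSpace Ω] {P : Measure Ω} [IsProbabilityMeasure P]
    {X : Ω → Fin n → ℝ} (hX : HasConeDirDist n p P X) {A : Set ℝ} (hA : MeasurableSet A) :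
    P {ω | ratioAGM p (X ω) ∈ A} = unifBallp n p {x | ratioAGM p x ∈ A} := by
  obtain ⟨μR, C, hμ, hI, h0, hC, hmap⟩ := hX
  have hCp : IsProbabilityMeasure C := hC.1
  have hsm : Measurable fun rz : ℝ × (Fin n → ℝ) => rz.1 • rz.2 := by fun_prop
  have hXm : AEMeasurable X P := by
    by_contra h
    rw [Measure.map_of_not_aemeasurable h] at hmap
    have : IsProbabilityMeasure (Measure.map (fun rz : ℝ × (Fin n → ℝ) => rz.1 • rz.2)
      (μR.prod C)) := Measure.isProbabilityMeasure_map hsm.aemeasurable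
    exact IsProbabilityMeasure.ne_zero _ hmap.symm
  have hS : MeasurableSet {x : Fin n → ℝ | ratioAGM p x ∈ A} := measurable_ratioAGM p hA
  have hpos : ∀ᵐ rz ∂(μR.prod C), 0 < rz.1 := by
    have h : ∀ᵐ r ∂μR, 0 < r := by
      have h1 : ∀ᵐ r ∂μR, r ∈ Icc (0 : ℝ) 1 := hI
      have h2 : ∀ᵐ r ∂μR, r ∉ ({0} : Set ℝ) := measure_eq_zero_iff_ae_notMem.1 h0
      filter_upwards [h1, h2] with r hr hr0
      exact hr.1.lt_of_ne (Ne.symm hr0)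
    exact Measure.quasiMeasurePreserving_fst.ae h
  calc P {ω | ratioAGM p (X ω) ∈ A}
      = Measure.map X P {x | ratioAGM p x ∈ A} := (Measure.map_apply_of_aemeasurable hXm hS).symm
    _ = (μR.prod C) {rz | ratioAGM p (rz.1 • rz.2) ∈ A} := by
      rw [hmap, Measure.map_apply hsm hS]
      rfl
    _ = (μR.prod C) (univ ×ˢ {x | ratioAGM p x ∈ A}) := by
      refine measure_congr ?_
      filter_upwards [hpos] with rz hrz
      refine propext ?_
      change ratioAGM p (rz.1 • rz.2) ∈ A ↔ rz.1 ∈ univ ∧ ratioAGM p rz.2 ∈ A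
      rw [ratioAGM_smul hp hn hrz]
      simp
    _ = C {x | ratioAGM p x ∈ A} := by rw [Measure.prod_prod, measure_univ, one_mul]
    _ = _ := hC.apply_eq_unifBallp hp hn hS fun r hr x => by
      simp only [mem_ofPred_eq, ratioAGM_smul hp hn hr]

/-- The normalized logarithmic moment generating function of `log R_n`. -/
def scaledCGF (p : ℝ) (n : ℕ) (t : ℝ) : ℝ :=
  stirlingRemainder ((1 + t) / p) - stirlingRemainder (1 / p) +
    (stirlingRemainder (n * (1 / p)) / n - stirlingRemainder (n * ((1 + t) / p)) / n)

/-- The limit of `scaledCGF p n` as `n → ∞`. -/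
def limitCGF (p t : ℝ) : ℝ := stirlingRemainder ((1 + t) / p) - stirlingRemainder (1 / p)

lemma tendsto_scaledCGF {p t : ℝ} (hp : 1 ≤ p) (ht : -1 < t) :
    Tendsto (fun n => scaledCGF p n t) atTop (𝓝 (limitCGF p t)) := by
  have h1 := tendsto_stirlingRemainder_mul_div (a := 1 / p) (by positivity)
  have h2 := tendsto_stirlingRemainder_mul_div (a := (1 + t) / p)
    (div_pos (by linarith) (by linarith))
  simpa [limitCGF, scaledCGF] using (h1.sub h2).const_add (limitCGF p t)

lemma Gamma_eq_exp {x : ℝ} (hx : 0 < x) :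
    Real.Gamma x = Real.exp (stirlingRemainder x + x * Real.log x - x) := by
  rw [stirlingRemainder, show ∀ a b : ℝ, a - b + x + b - x = a by intros; ring,
    Real.exp_log (Real.Gamma_pos_of_pos hx)]

lemma ball_moment_eq_exp {p t : ℝ} (hp : 1 ≤ p) (ht : -1 < t) {n : ℕ} (hn : 1 ≤ n) :
    (n : ℝ) ^ (n * t / p) * (2 * (1 / p * Real.Gamma ((1 + t) / p))) ^ n /
        (n / p * Real.Gamma (n * ((1 + t) / p))) =
      (2 * (1 / p)) ^ n / (n / p) * Real.exp (n * (stirlingRemainder ((1 + t) / p)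
        - stirlingRemainder (n * ((1 + t) / p)) / n - 1 / p * Real.log n)) := by
  have hn' : (0 : ℝ) < n := by exact_mod_cast hn
  have hp0 : 0 < p := by linarith
  have hg : 0 < (1 + t) / p := div_pos (by linarith) hp0
  rw [← mul_assoc, mul_pow _ (Real.Gamma _), Gamma_eq_exp hg, Gamma_eq_exp (mul_pos hn' hg),
    Real.rpow_def_of_pos hn', ← Real.exp_nat_mul, mul_left_comm, mul_div_mul_comm, ← Real.exp_add,
    ← Real.exp_sub]
  congr 2
  rw [Real.log_mul hn'.ne' hg.ne']
  field_simp
  ring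

lemma lintegral_unifBallp_exp_log_ratioAGM {p t : ℝ} (hp : 1 ≤ p) (ht : -1 < t) {n : ℕ}
    (hn : 1 ≤ n) :
    ∫⁻ x, ENNReal.ofReal (Real.exp (n * t * Real.log (ratioAGM p x))) ∂(unifBallp n p) =
      ENNReal.ofReal (Real.exp (n * scaledCGF p n t)) := by
  have hn' : (0 : ℝ) < n := by exact_mod_cast hn
  have hp0 : 0 < p := by linarith
  have hvol : volume (unitBallp n p) = ENNReal.ofReal ((2 * (1 / p)) ^ n / (n / p) *
      Real.exp (n * (stirlingRemainder (1 / p)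
        - stirlingRemainder (n * (1 / p)) / n - 1 / p * Real.log n))) := by
    have h := lintegral_unitBallp_exp_log_ratioAGM (t := 0) hp (by norm_num) hn
    rw [ball_moment_eq_exp hp (by norm_num) hn] at h
    simpa using h
  have hc : 0 < (2 * (1 / p)) ^ n / (n / p) := by positivity
  rw [unifBallp, lintegral_smul_measure, lintegral_unitBallp_exp_log_ratioAGM hp ht hn,
    ball_moment_eq_exp hp ht hn, hvol, smul_eq_mul, mul_comm, ← div_eq_mul_inv,
    ← ENNReal.ofReal_div_of_pos (by positivity), mul_div_mul_left _ _ hc.ne', ← Real.exp_sub]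
  congr 2
  unfold scaledCGF
  ring

section ExpGrowth

open ExpGrowth

lemma log_ofReal_exp_mul_div {n : ℕ} (hn : 1 ≤ n) (a : ℝ) :
    ENNReal.log (ENNReal.ofReal (Real.exp (n * a))) / (n : EReal) = (a : EReal) := by
  have hn' : (n : ℝ) ≠ 0 := by positivity
  rw [ENNReal.log_ofReal_of_pos (Real.exp_pos _), Real.log_exp, ← EReal.coe_natCast,
    ← EReal.coe_div, mul_div_cancel_left₀ _ hn']

lemma expGrowthSup_le_of_tendsto {u : ℕ → ℝ≥0∞} {a : ℕ → ℝ} {l : ℝ}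
    (h : ∀ᶠ n : ℕ in atTop, u n ≤ ENNReal.ofReal (Real.exp (n * a n)))
    (ha : Tendsto a atTop (𝓝 l)) : expGrowthSup u ≤ l := by
  have hl : Tendsto (fun n => (a n : EReal)) atTop (𝓝 (l : EReal)) := EReal.tendsto_coe.2 ha
  rw [← hl.limsup_eq]
  refine limsup_le_limsup ?_
  filter_upwards [h, eventually_ge_atTop 1] with n hn hn1
  rw [← log_ofReal_exp_mul_div hn1 (a n)]
  exact EReal.div_le_div_right_of_nonneg (by positivity) (ENNReal.log_monotone hn)

lemma le_expGrowthInf_of_tendsto {u : ℕ → ℝ≥0∞} {a : ℕ → ℝ} {l : ℝ}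
    (h : ∀ᶠ n : ℕ in atTop, ENNReal.ofReal (Real.exp (n * a n)) ≤ u n)
    (ha : Tendsto a atTop (𝓝 l)) : l ≤ expGrowthInf u := by
  have hl : Tendsto (fun n => (a n : EReal)) atTop (𝓝 (l : EReal)) := EReal.tendsto_coe.2 ha
  rw [← hl.liminf_eq]
  refine liminf_le_liminf ?_
  filter_upwards [h, eventually_ge_atTop 1] with n hn hn1
  rw [← log_ofReal_exp_mul_div hn1 (a n)]
  exact EReal.div_le_div_right_of_nonneg (by positivity) (ENNReal.log_monotone hn)

lemma inv_natCast_mul_log (u : ℕ → ℝ≥0∞) (n : ℕ) :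
    (((n : ℝ)⁻¹ : ℝ) : EReal) * ENNReal.log (u n) = ENNReal.log (u n) / (n : EReal) := by
  rw [EReal.coe_inv, EReal.coe_natCast, EReal.div_eq_inv_mul]

end ExpGrowth

/-- The measures `κ n` on `ℝ` have moment generating functions `t ↦ exp (n * c n (t / n))`
whose exponents `c n t` converge to `Λ t`, for all `t > -1`. -/
structure HasScaledCGF (κ : ℕ → Measure ℝ) (c : ℕ → ℝ → ℝ) (Λ : ℝ → ℝ) : Prop where
  lintegral_exp : ∀ n : ℕ, 1 ≤ n → ∀ t : ℝ, -1 < t →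
    ∫⁻ x, ENNReal.ofReal (Real.exp (n * t * x)) ∂(κ n) = ENNReal.ofReal (Real.exp (n * c n t))
  tendsto : ∀ t : ℝ, -1 < t → Tendsto (fun n => c n t) atTop (𝓝 (Λ t))

namespace HasScaledCGF

open ExpGrowth

variable {κ : ℕ → Measure ℝ} {c : ℕ → ℝ → ℝ} {Λ : ℝ → ℝ}

lemma setLIntegral_exp_le (h : HasScaledCGF κ c Λ) {n : ℕ} (hn : 1 ≤ n) {t η a : ℝ}
    (ht : -1 < t + η) {S : Set ℝ} (hSm : MeasurableSet S) (hS : ∀ x ∈ S, a ≤ η * x) :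
    ∫⁻ x in S, ENNReal.ofReal (Real.exp (n * t * x)) ∂(κ n) ≤
      ENNReal.ofReal (Real.exp (n * (c n (t + η) - a))) := by
  calc ∫⁻ x in S, ENNReal.ofReal (Real.exp (n * t * x)) ∂(κ n)
      ≤ ∫⁻ x in S, ENNReal.ofReal (Real.exp (-(n * a))) *
          ENNReal.ofReal (Real.exp (n * (t + η) * x)) ∂(κ n) := by
        refine setLIntegral_mono' hSm fun x hx => ?_
        rw [← ENNReal.ofReal_mul (by positivity), ← Real.exp_add]
        refine ENNReal.ofReal_le_ofReal (Real.exp_le_exp.2 ?_)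
        have := mul_le_mul_of_nonneg_left (hS x hx) (n.cast_nonneg : (0 : ℝ) ≤ n)
        linarith
    _ ≤ ∫⁻ x, ENNReal.ofReal (Real.exp (-(n * a))) *
          ENNReal.ofReal (Real.exp (n * (t + η) * x)) ∂(κ n) := setLIntegral_le_lintegral _ _
    _ = _ := by
        rw [lintegral_const_mul' _ _ ENNReal.ofReal_ne_top, h.lintegral_exp n hn _ ht,
          ← ENNReal.ofReal_mul (by positivity), ← Real.exp_add]
        congr 2
        ring

lemma measure_le (h : HasScaledCGF κ c Λ) {n : ℕ} (hn : 1 ≤ n) {t a : ℝ} (ht : -1 < t)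
    {S : Set ℝ} (hSm : MeasurableSet S) (hS : ∀ x ∈ S, a ≤ t * x) :
    κ n S ≤ ENNReal.ofReal (Real.exp (n * (c n t - a))) := by
  simpa using h.setLIntegral_exp_le hn (t := 0) (η := t) (by simpa using ht) hSm hS

lemma expGrowthSup_le (h : HasScaledCGF κ c Λ) {t a : ℝ} (ht : -1 < t)
    {S : Set ℝ} (hSm : MeasurableSet S) (hS : ∀ x ∈ S, a ≤ t * x) :
    expGrowthSup (fun n => κ n S) ≤ ((Λ t - a : ℝ) : EReal) := by
  refine expGrowthSup_le_of_tendsto (a := fun n => c n t - a) ?_ ((h.tendsto t ht).sub_const a)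
  filter_upwards [eventually_ge_atTop 1] with n hn using h.measure_le hn ht hSm hS

lemma eventually_setLIntegral_le (h : HasScaledCGF κ c Λ) {t η a : ℝ} (ht : -1 < t)
    (hη : -1 < t + η) (ha : Λ (t + η) - a < Λ t) {S : Set ℝ} (hSm : MeasurableSet S)
    (hS : ∀ x ∈ S, a ≤ η * x) :
    ∀ᶠ n : ℕ in atTop, ∫⁻ x in S, ENNReal.ofReal (Real.exp (n * t * x)) ∂(κ n) ≤
      ENNReal.ofReal (Real.exp (n * c n t) / 4) := by
  have hlim : Tendsto (fun n : ℕ => (n : ℝ) * (c n (t + η) - a - c n t)) atTop atBot :=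
    tendsto_natCast_atTop_atTop.atTop_mul_neg (sub_neg.2 ha)
      (((h.tendsto _ hη).sub_const a).sub (h.tendsto t ht))
  filter_upwards [eventually_ge_atTop 1, hlim.eventually_le_atBot (-Real.log 4)] with n hn hn'
  refine (h.setLIntegral_exp_le hn hη hSm hS).trans (ENNReal.ofReal_le_ofReal ?_)
  rw [← Real.exp_log (show (0 : ℝ) < 4 by norm_num), ← Real.exp_sub]
  refine Real.exp_le_exp.2 ?_
  linarith

lemma exists_increment {t s δ : ℝ} (ht : -1 < t) (hΛ : HasDerivAt Λ s t) (hδ : 0 < δ) :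
    ∃ ε > 0, -1 < t - ε ∧ Λ (t + ε) - ε * (s + δ) < Λ t ∧ Λ (t - ε) - -ε * (s - δ) < Λ t := by
  have h1 := (hasDerivAt_iff_isLittleO_nhds_zero.1 hΛ).def (half_pos hδ)
  obtain ⟨r, hr, hr'⟩ := Metric.eventually_nhds_iff.1 h1
  have hε : 0 < min (r / 2) ((t + 1) / 2) := lt_min (by linarith) (by linarith)
  set ε := min (r / 2) ((t + 1) / 2) with hεdef
  have hεr : ε < r := (min_le_left _ _).trans_lt (by linarith)
  have hεt : ε ≤ (t + 1) / 2 := min_le_right _ _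
  have hp := hr' (y := ε) (by simpa [abs_of_pos hε] using hεr)
  have hm := hr' (y := -ε) (by simpa [abs_of_pos hε] using hεr)
  simp only [Real.norm_eq_abs, abs_neg, abs_of_pos hε, smul_eq_mul, ← sub_eq_add_neg] at hp hm
  have hpos := mul_pos hδ hε
  refine ⟨ε, hε, by linarith, ?_, ?_⟩
  · have := (abs_le.1 hp).2
    linarith
  · have := (abs_le.1 hm).2
    linarith

lemma le_expGrowthInf_Ioo (h : HasScaledCGF κ c Λ) {t s δ : ℝ} (ht : -1 < t)
    (hΛ : HasDerivAt Λ s t) (hδ : 0 < δ) :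
    ((Λ t - t * s - |t| * δ : ℝ) : EReal) ≤
      expGrowthInf (fun n => κ n (Ioo (s - δ) (s + δ))) := by
  obtain ⟨ε, hε, hεt, hp, hm⟩ := exists_increment ht hΛ hδ
  have hright := h.eventually_setLIntegral_le ht (by linarith) hp (S := Ici (s + δ))
    measurableSet_Ici fun x hx => mul_le_mul_of_nonneg_left hx hε.le
  have hleft := h.eventually_setLIntegral_le (η := -ε) ht (by linarith)
    (by simpa [sub_eq_add_neg] using hm) (S := Iic (s - δ))
    measurableSet_Iic fun x hx => mul_le_mul_of_nonpos_left hx (by linarith)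
  have hlim : Tendsto (fun n : ℕ => c n t - t * s - |t| * δ - Real.log 2 / n) atTop
      (𝓝 (Λ t - t * s - |t| * δ)) := by
    simpa using (((h.tendsto t ht).sub_const (t * s)).sub_const (|t| * δ)).sub
      (tendsto_const_div_atTop_nhds_zero_nat (Real.log 2))
  refine le_expGrowthInf_of_tendsto ?_ hlim
  filter_upwards [hright, hleft, eventually_ge_atTop 1] with n hR hL hn
  have hn' : (0 : ℝ) < n := by exact_mod_cast hn
  have hcover : (univ : Set ℝ) = Ioo (s - δ) (s + δ) ∪ (Ici (s + δ) ∪ Iic (s - δ)) := by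
    ext x
    simp only [mem_univ, mem_union, mem_Ioo, mem_Ici, mem_Iic, true_iff]
    by_cases h1 : s + δ ≤ x
    · exact Or.inr (Or.inl h1)
    by_cases h2 : x ≤ s - δ
    · exact Or.inr (Or.inr h2)
    exact Or.inl ⟨not_le.1 h2, not_le.1 h1⟩
  have hmid : ∫⁻ x in Ioo (s - δ) (s + δ), ENNReal.ofReal (Real.exp (n * t * x)) ∂(κ n) ≤
      ENNReal.ofReal (Real.exp (n * (t * s + |t| * δ))) * κ n (Ioo (s - δ) (s + δ)) := by
    rw [← setLIntegral_const]
    refine setLIntegral_mono' measurableSet_Ioo fun x hx => ?_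
    refine ENNReal.ofReal_le_ofReal (Real.exp_le_exp.2 ?_)
    have h1 : t * (x - s) ≤ |t| * δ := by
      refine (le_abs_self _).trans ?_
      rw [abs_mul]
      exact mul_le_mul_of_nonneg_left (abs_le.2 ⟨by linarith [hx.1], by linarith [hx.2]⟩)
        (abs_nonneg t)
    rw [mul_assoc]
    exact mul_le_mul_of_nonneg_left (by linarith) hn'.le
  have htot : ENNReal.ofReal (Real.exp (n * c n t)) ≤
      ENNReal.ofReal (Real.exp (n * (t * s + |t| * δ))) * κ n (Ioo (s - δ) (s + δ)) +
        ENNReal.ofReal (Real.exp (n * c n t) / 2) := by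
    rw [← h.lintegral_exp n hn t ht, ← setLIntegral_univ, hcover]
    refine (lintegral_union_le _ _ _).trans (add_le_add hmid ?_)
    refine (lintegral_union_le _ _ _).trans ((add_le_add hR hL).trans_eq ?_)
    rw [← ENNReal.ofReal_add (by positivity) (by positivity)]
    congr 1
    ring
  have hhalf : ENNReal.ofReal (Real.exp (n * c n t) / 2) ≤
      ENNReal.ofReal (Real.exp (n * (t * s + |t| * δ))) * κ n (Ioo (s - δ) (s + δ)) := by
    refine ENNReal.le_of_add_le_add_right (a := ENNReal.ofReal (Real.exp (n * c n t) / 2))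
      ENNReal.ofReal_ne_top ?_
    rw [← ENNReal.ofReal_add (by positivity) (by positivity), add_halves]
    exact htot
  rw [mul_comm (ENNReal.ofReal (Real.exp (n * (t * s + |t| * δ)))),
    ← ENNReal.div_le_iff (ENNReal.ofReal_pos.2 (Real.exp_pos _)).ne'
    ENNReal.ofReal_ne_top, ← ENNReal.ofReal_div_of_pos (Real.exp_pos _)] at hhalf
  refine le_of_eq_of_le ?_ hhalf
  congr 1
  have h2 : Real.exp (n * c n t) / 2 = Real.exp (n * c n t - Real.log 2) := by
    rw [Real.exp_sub, Real.exp_log two_pos]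
  rw [h2, ← Real.exp_sub]
  congr 1
  field_simp
  ring

end HasScaledCGF

section RatioAGM

open ExpGrowth

/-- The law of `log R_n` for a vector uniformly distributed on the unit ball of `ℓ_p^n`. -/
def logRatioLaw (p : ℝ) (n : ℕ) : Measure ℝ :=
  (unifBallp n p).map fun x => Real.log (ratioAGM p x)

lemma measurable_log_ratioAGM (p : ℝ) {n : ℕ} :
    Measurable fun x : Fin n → ℝ => Real.log (ratioAGM p x) :=
  Real.measurable_log.comp (measurable_ratioAGM p)

lemma hasScaledCGF_logRatioLaw {p : ℝ} (hp : 1 ≤ p) :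
    HasScaledCGF (logRatioLaw p) (scaledCGF p) (limitCGF p) where
  lintegral_exp n hn t ht := by
    rw [logRatioLaw, lintegral_map (by fun_prop) (measurable_log_ratioAGM p)]
    exact lintegral_unifBallp_exp_log_ratioAGM hp ht hn
  tendsto t ht := tendsto_scaledCGF hp ht

lemma ae_unifBallp_ratioAGM_pos {p : ℝ} {n : ℕ} (hn : 1 ≤ n) :
    ∀ᵐ x ∂(unifBallp n p), 0 < ratioAGM p x :=
  ae_unifBallp_of_ae ((ae_forall_coord_ne_zero n).mono fun _ hx => ratioAGM_pos hn hx)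

lemma unifBallp_ratioAGM_mem_le {p : ℝ} {n : ℕ} (hn : 1 ≤ n) {A S : Set ℝ}
    (hS : MeasurableSet S) (h : ∀ r ∈ A, 0 < r → Real.log r ∈ S) :
    unifBallp n p {x | ratioAGM p x ∈ A} ≤ logRatioLaw p n S := by
  rw [logRatioLaw, Measure.map_apply (measurable_log_ratioAGM p) hS]
  exact measure_mono_ae ((ae_unifBallp_ratioAGM_pos hn).mono fun x hx hA => h _ hA hx)

lemma logRatioLaw_le_unifBallp {p : ℝ} {n : ℕ} (hn : 1 ≤ n) {A S : Set ℝ}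
    (hS : MeasurableSet S) (h : ∀ r, 0 < r → Real.log r ∈ S → r ∈ A) :
    logRatioLaw p n S ≤ unifBallp n p {x | ratioAGM p x ∈ A} := by
  rw [logRatioLaw, Measure.map_apply (measurable_log_ratioAGM p) hS]
  exact measure_mono_ae ((ae_unifBallp_ratioAGM_pos hn).mono fun x hx hA => h _ hx hA)

lemma expGrowthSup_unifBallp_le {p t a : ℝ} (hp : 1 ≤ p) (ht : -1 < t) {A S : Set ℝ}
    (hSm : MeasurableSet S) (hA : ∀ r ∈ A, 0 < r → Real.log r ∈ S) (hS : ∀ x ∈ S, a ≤ t * x) :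
    expGrowthSup (fun n => unifBallp n p {x | ratioAGM p x ∈ A}) ≤
      ((limitCGF p t - a : ℝ) : EReal) := by
  refine le_trans (expGrowthSup_eventually_monotone ?_)
    ((hasScaledCGF_logRatioLaw hp).expGrowthSup_le ht hSm hS)
  filter_upwards [eventually_ge_atTop 1] with n hn using unifBallp_ratioAGM_mem_le hn hSm hA

lemma limitCGF_mul_Gfun_sub {p : ℝ} (hp : 0 < p) (θ : ℝ) :
    limitCGF p (p * Gfun p θ - 1) - (p * Gfun p θ - 1) * Real.log θ = -ratefn p θ := by
  rw [ratefn_eq, limitCGF, add_sub_cancel, mul_div_cancel_left₀ _ hp.ne']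
  ring

lemma hasDerivAt_limitCGF {p θ : ℝ} (hp : 0 < p) (hθ : θ ∈ Ioo (0 : ℝ) 1) :
    HasDerivAt (limitCGF p) (Real.log θ) (p * Gfun p θ - 1) := by
  have h1 : HasDerivAt (fun t : ℝ => (1 + t) / p) (1 / p) (p * Gfun p θ - 1) :=
    ((hasDerivAt_id _).const_add 1).div_const p
  have hG : (1 + (p * Gfun p θ - 1)) / p = Gfun p θ := by
    rw [add_sub_cancel, mul_div_cancel_left₀ _ hp.ne']
  have h2 := hasDerivAt_stirlingRemainder (Gfun_pos hp hθ)
  have h3 := (h2.comp_of_eq (p * Gfun p θ - 1) h1 hG.symm).sub_const (stirlingRemainder (1 / p))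
  rw [Hfun_Gfun hp hθ, mul_comm p, mul_assoc, mul_one_div_cancel hp.ne', mul_one] at h3
  exact h3

/-- The almost sure limit of `R_n`, at which the rate function vanishes. -/
def typicalRatio (p : ℝ) : ℝ := Real.exp (Hfun (1 / p) / p)

lemma typicalRatio_mem {p : ℝ} (hp : 0 < p) : typicalRatio p ∈ Ioo (0 : ℝ) 1 :=
  ⟨Real.exp_pos _, Real.exp_lt_one_iff.2 (div_neg_of_neg_of_pos (Hfun_neg (by positivity)) hp)⟩

lemma mul_log_typicalRatio {p : ℝ} (hp : 0 < p) :
    p * Real.log (typicalRatio p) = Hfun (1 / p) := by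
  rw [typicalRatio, Real.log_exp, mul_div_cancel₀ _ hp.ne']

lemma mul_Gfun_sub_one_nonpos_iff {p θ : ℝ} (hp : 0 < p) (hθ : θ ∈ Ioo (0 : ℝ) 1) :
    p * Gfun p θ - 1 ≤ 0 ↔ θ ≤ typicalRatio p := by
  rw [sub_nonpos, mul_comm, ← le_div_iff₀ hp,
    ← Hfun_strictMonoOn.le_iff_le (Gfun_pos hp hθ) (one_div_pos.2 hp), Hfun_Gfun hp hθ,
    ← mul_log_typicalRatio hp, mul_le_mul_iff_right₀ hp,
    Real.log_le_log_iff hθ.1 (typicalRatio_mem hp).1]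

lemma neg_one_lt_mul_Gfun_sub {p θ : ℝ} (hp : 0 < p) (hθ : θ ∈ Ioo (0 : ℝ) 1) :
    -1 < p * Gfun p θ - 1 := by
  linarith [mul_pos hp (Gfun_pos hp hθ)]

lemma expGrowthSup_Iic_le {p a : ℝ} (hp : 1 ≤ p) (ha : a ≤ typicalRatio p) :
    expGrowthSup (fun n => unifBallp n p {x | ratioAGM p x ∈ Iic a}) ≤ -ratefnExt p a := by
  have hp0 : 0 < p := by linarith
  rcases le_or_gt a 0 with ha0 | ha0
  · refine le_of_eq_of_le ?_ bot_le
    rw [← expGrowthSup_zero]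
    refine expGrowthSup_congr ?_
    filter_upwards [eventually_ge_atTop 1] with n hn
    refine measure_mono_null ?_ (ae_unifBallp_ratioAGM_pos (p := p) hn)
    exact fun x hx => (mem_Iic.1 hx |>.trans ha0).not_gt
  have haI : a ∈ Ioo (0 : ℝ) 1 := ⟨ha0, ha.trans_lt (typicalRatio_mem hp0).2⟩
  rw [ratefnExt, if_pos haI, ← EReal.coe_neg, ← limitCGF_mul_Gfun_sub hp0]
  refine expGrowthSup_unifBallp_le hp (neg_one_lt_mul_Gfun_sub hp0 haI)
    (measurableSet_Iic (a := Real.log a)) (fun r hr hr0 => Real.log_le_log hr0 hr) fun x hx => ?_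
  exact mul_le_mul_of_nonpos_left hx ((mul_Gfun_sub_one_nonpos_iff hp0 haI).2 ha)

lemma expGrowthSup_Ici_one {p : ℝ} (hp : 1 ≤ p) :
    expGrowthSup (fun n => unifBallp n p {x | ratioAGM p x ∈ Ici 1}) = ⊥ := by
  have hp0 : 0 < p := by linarith
  have hlim : Tendsto (fun N : ℕ => ((limitCGF p (p * N - 1) - 0 : ℝ) : EReal)) atTop (𝓝 ⊥) := by
    refine EReal.tendsto_coe_nhds_bot_iff.2 ?_
    have h := tendsto_atBot_add_const_right atTop (-stirlingRemainder (1 / p))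
      tendsto_stirlingRemainder_natCast
    refine h.congr fun N => ?_
    rw [limitCGF, add_sub_cancel, mul_div_cancel_left₀ _ hp0.ne']
    ring
  refine le_bot_iff.1 (ge_of_tendsto hlim ?_)
  filter_upwards [eventually_ge_atTop 1] with N hN
  have hN' : (1 : ℝ) ≤ N := by exact_mod_cast hN
  have ht : 0 ≤ p * N - 1 := by nlinarith
  exact expGrowthSup_unifBallp_le hp (by linarith) (measurableSet_Ici (a := 0))
    (fun r hr _ => Real.log_nonneg hr) fun x hx => mul_nonneg ht hx

lemma expGrowthSup_Ici_le {p b : ℝ} (hp : 1 ≤ p) (hb : typicalRatio p ≤ b) :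
    expGrowthSup (fun n => unifBallp n p {x | ratioAGM p x ∈ Ici b}) ≤ -ratefnExt p b := by
  have hp0 : 0 < p := by linarith
  have hb0 : 0 < b := (typicalRatio_mem hp0).1.trans_le hb
  rcases le_or_gt 1 b with hb1 | hb1
  · refine le_trans (expGrowthSup_monotone fun n => ?_)
      ((expGrowthSup_Ici_one hp).trans_le bot_le)
    exact measure_mono fun x hx => hb1.trans hx
  have hbI : b ∈ Ioo (0 : ℝ) 1 := ⟨hb0, hb1⟩
  rw [ratefnExt, if_pos hbI, ← EReal.coe_neg, ← limitCGF_mul_Gfun_sub hp0]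
  refine expGrowthSup_unifBallp_le hp (neg_one_lt_mul_Gfun_sub hp0 hbI)
    (measurableSet_Ici (a := Real.log b)) (fun r hr _ => Real.log_le_log hb0 hr) fun x hx => ?_
  refine mul_le_mul_of_nonneg_left hx ?_
  rcases hb.eq_or_lt with rfl | hlt
  · rw [Gfun, mul_log_typicalRatio hp0, Hinv_Hfun (one_div_pos.2 hp0),
      mul_one_div_cancel hp0.ne', sub_self]
  · exact (not_le.1 fun h => hlt.not_ge ((mul_Gfun_sub_one_nonpos_iff hp0 hbI).1 h)).le

/-- The upper large deviation bound. -/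
lemma expGrowthSup_le_neg_iInf {p : ℝ} (hp : 1 ≤ p) {A : Set ℝ} (hA : IsCompact A) :
    expGrowthSup (fun n => unifBallp n p {x | ratioAGM p x ∈ A}) ≤
      -⨅ θ ∈ A, ratefnExt p θ := by
  have hle : ∀ a ∈ A, -ratefnExt p a ≤ -⨅ θ ∈ A, ratefnExt p θ := fun a ha =>
    EReal.neg_le_neg_iff.2 (iInf₂_le a ha)
  have hempty : expGrowthSup (fun n => unifBallp n p {x | ratioAGM p x ∈ (∅ : Set ℝ)}) = ⊥ := by
    rw [← expGrowthSup_zero]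
    congr 1
    funext n
    simp
  have hB : expGrowthSup (fun n => unifBallp n p {x | ratioAGM p x ∈ A ∩ Iic (typicalRatio p)}) ≤
      -⨅ θ ∈ A, ratefnExt p θ := by
    rcases (A ∩ Iic (typicalRatio p)).eq_empty_or_nonempty with h | h
    · rw [h, hempty]
      exact bot_le
    · obtain ⟨a, ha, hmax⟩ := (hA.inter_right isClosed_Iic).exists_isGreatest h
      refine (expGrowthSup_monotone fun n => ?_).trans
        ((expGrowthSup_Iic_le hp ha.2).trans (hle a ha.1))
      exact measure_mono fun x hx => hmax hx
  have hC : expGrowthSup (fun n => unifBallp n p {x | ratioAGM p x ∈ A ∩ Ici (typicalRatio p)}) ≤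
      -⨅ θ ∈ A, ratefnExt p θ := by
    rcases (A ∩ Ici (typicalRatio p)).eq_empty_or_nonempty with h | h
    · rw [h, hempty]
      exact bot_le
    · obtain ⟨b, hb, hmin⟩ := (hA.inter_right isClosed_Ici).exists_isLeast h
      refine (expGrowthSup_monotone fun n => ?_).trans
        ((expGrowthSup_Ici_le hp hb.2).trans (hle b hb.1))
      exact measure_mono fun x hx => hmin hx
  refine le_trans (expGrowthSup_monotone fun n => ?_) (expGrowthSup_add.trans_le (max_le hB hC))
  refine (measure_mono fun x hx => ?_).trans (measure_union_le _ _)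
  rcases le_total (ratioAGM p x) (typicalRatio p) with h | h
  · exact Or.inl ⟨hx, h⟩
  · exact Or.inr ⟨hx, h⟩

/-- The lower large deviation bound. -/
lemma neg_ratefn_le_expGrowthInf {p θ : ℝ} (hp : 1 ≤ p) (hθ : θ ∈ Ioo (0 : ℝ) 1) {A : Set ℝ}
    (hA : A ∈ 𝓝 θ) :
    ((-ratefn p θ : ℝ) : EReal) ≤
      expGrowthInf (fun n => unifBallp n p {x | ratioAGM p x ∈ A}) := by
  have hp0 : 0 < p := by linarith
  set t := p * Gfun p θ - 1 with ht
  have hexp : Real.exp ⁻¹' A ∈ 𝓝 (Real.log θ) :=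
    Real.continuous_exp.continuousAt.preimage_mem_nhds (by rwa [Real.exp_log hθ.1])
  obtain ⟨ε, hε, hball⟩ := Metric.mem_nhds_iff.1 hexp
  have hlim : Tendsto (fun δ : ℝ => ((-ratefn p θ - |t| * δ : ℝ) : EReal)) (𝓝[>] 0)
      (𝓝 ((-ratefn p θ : ℝ) : EReal)) := by
    refine EReal.tendsto_coe.2 (tendsto_nhdsWithin_of_tendsto_nhds ?_)
    have : Continuous fun δ : ℝ => -ratefn p θ - |t| * δ := by fun_prop
    simpa using this.tendsto 0
  refine le_of_tendsto hlim ?_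
  filter_upwards [Ioo_mem_nhdsGT hε] with δ hδ
  have h := (hasScaledCGF_logRatioLaw hp).le_expGrowthInf_Ioo
    (neg_one_lt_mul_Gfun_sub hp0 hθ) (hasDerivAt_limitCGF hp0 hθ) hδ.1
  rw [limitCGF_mul_Gfun_sub hp0] at h
  refine h.trans (expGrowthInf_eventually_monotone ?_)
  filter_upwards [eventually_ge_atTop 1] with n hn
  refine logRatioLaw_le_unifBallp hn measurableSet_Ioo fun r hr hlog => ?_
  rw [← Real.exp_log hr]
  refine hball ?_
  rw [Real.ball_eq_Ioo]
  exact Ioo_subset_Ioo (by linarith [hδ.2]) (by linarith [hδ.2]) hlog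

end RatioAGM

/-- Proposition 2.2: the sequence `(R_n)` satisfies an LDP on `[0,1]` with
speed `n` and rate function `I_p` (extended by `+∞` outside `(0,1)`): an upper bound for
sets that are closed in `[0,1]` and a lower bound for sets that are open in `[0,1]`. -/
theorem statement4 (p : ℝ) (hp : 1 ≤ p)
    (Ω : ℕ → Type) [∀ n, MeasurableSpace (Ω n)]
    (P : ∀ n, Measure (Ω n)) [∀ n, IsProbabilityMeasure (P n)]
    (X : ∀ n, Ω n → Fin n → ℝ)
    (hX : ∀ n, 1 ≤ n → HasConeDirDist n p (P n) (X n)) :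
    (∀ A : Set ℝ, A ⊆ Icc 0 1 →
      IsClosed ((fun x : Icc (0:ℝ) 1 => (x : ℝ)) ⁻¹' A) →
      Filter.limsup
          (fun n : ℕ => (((n : ℝ)⁻¹ : ℝ) : EReal) *
            ENNReal.log ((P n) {ω | ratioAGM p (X n ω) ∈ A})) atTop
        ≤ - ⨅ θ ∈ A, ratefnExt p θ) ∧
    (∀ A : Set ℝ, A ⊆ Icc 0 1 →
      IsOpen ((fun x : Icc (0:ℝ) 1 => (x : ℝ)) ⁻¹' A) →
      - ⨅ θ ∈ A, ratefnExt p θ ≤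
        Filter.liminf
          (fun n : ℕ => (((n : ℝ)⁻¹ : ℝ) : EReal) *
            ENNReal.log ((P n) {ω | ratioAGM p (X n ω) ∈ A})) atTop) := by
  have hcongr : ∀ A : Set ℝ, MeasurableSet A →
      (fun n => P n {ω | ratioAGM p (X n ω) ∈ A}) =ᶠ[atTop]
        fun n => unifBallp n p {x | ratioAGM p x ∈ A} := fun A hA => by
    filter_upwards [eventually_ge_atTop 1] with n hn
    exact (hX n hn).measure_ratioAGM_mem hp hn hA
  refine ⟨fun A hA01 hA => ?_, fun A hA01 hA => ?_⟩
  · have hAc : IsCompact A := by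
      have h := hA.isCompact.image continuous_subtype_val
      rwa [Subtype.image_preimage_coe, inter_eq_right.2 hA01] at h
    refine (limsup_congr (.of_forall (inv_natCast_mul_log _))).trans_le ?_
    exact (ExpGrowth.expGrowthSup_congr (hcongr A hAc.measurableSet)).trans_le
      (expGrowthSup_le_neg_iInf hp hAc)
  · obtain ⟨U, hU, hUA⟩ := isOpen_induced_iff.1 hA
    have hAU : A = Icc 0 1 ∩ U := by
      rw [← inter_eq_right.2 hA01]
      exact (Subtype.preimage_coe_eq_preimage_coe_iff.1 hUA).symm
    have hAm : MeasurableSet A := hAU ▸ measurableSet_Icc.inter hU.measurableSet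
    refine le_of_le_of_eq ?_ (liminf_congr (.of_forall (inv_natCast_mul_log _))).symm
    refine le_of_le_of_eq ?_ (ExpGrowth.expGrowthInf_congr (hcongr A hAm)).symm
    refine EReal.neg_le.2 (le_iInf₂ fun θ hθA => EReal.neg_le.2 ?_)
    by_cases hθ : θ ∈ Ioo (0 : ℝ) 1
    · rw [ratefnExt, if_pos hθ, ← EReal.coe_neg]
      refine neg_ratefn_le_expGrowthInf hp hθ ?_
      rw [hAU] at hθA ⊢
      exact inter_mem (Icc_mem_nhds hθ.1 hθ.2) (hU.mem_nhds hθA.2)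
    · rw [ratefnExt, if_neg hθ, EReal.neg_top]
      exact bot_le
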